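/- arXiv:2103.06917 — 5 statements merged into one kernel-verified Lean document; each statement's English description precedes it below -/
import Mathlib

section
/- Let R → R' be a faithfully flat homomorphism of Noetherian, integrally closed local domains. Then any ideal I of R such that the extended ideal I·R' (equivalently, I ⊗_R R') is a principal ideal of R' is itself a principal ideal of R. -/
/-!
Over a local ring, Nakayama's lemma shows that any nonempty generating set of a cyclic module
contains a single generator. So if `I·R'` is principal and `R'` is local, it is generated by the
image of one element `x ∈ I`; then `I` and `(x)` have the same extension to `R'`, and faithful
flatness makes extension of ideals injective, whence `I = (x)`. If only `R` is local, one first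
localizes `R'` at a prime over the maximal ideal of `R`.
-/

open IsLocalRing Submodule

section CyclicModule

variable {R M : Type*} [CommRing R] [IsLocalRing R] [AddCommGroup M] [Module R M]

theorem span_singleton_eq_or_mem_maximalIdeal_smul_span_singleton {x g : M}
    (hx : x ∈ span R {g}) : span R {x} = span R {g} ∨ x ∈ maximalIdeal R • span R {g} := by
  obtain ⟨c, rfl⟩ := mem_span_singleton.mp hx
  by_cases hc : IsUnit c
  · exact .inl (span_singleton_smul_eq hc g)
  · exact .inr (smul_mem_smul ((mem_maximalIdeal c).mpr hc) (mem_span_singleton_self g))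

theorem exists_mem_span_singleton_eq_span_of_isPrincipal {s : Set M} (hs : s.Nonempty)
    (h : (span R s).IsPrincipal) : ∃ x ∈ s, span R {x} = span R s := by
  obtain ⟨g, hg⟩ := h
  by_contra! hne
  have hle : span R s ≤ maximalIdeal R • span R s := by
    refine span_le.mpr fun x hx ↦ ?_
    have hxs : x ∈ span R s := subset_span hx
    have hxne : span R {x} ≠ span R s := hne x hx
    rw [hg] at hxs hxne ⊢
    exact (span_singleton_eq_or_mem_maximalIdeal_smul_span_singleton hxs).resolve_left hxne
  have hbot : span R s = ⊥ :=
    eq_bot_of_le_smul_of_le_jacobson_bot _ _ (hg ▸ fg_span_singleton g) hle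
      (maximalIdeal_le_jacobson ⊥)
  obtain ⟨x, hx⟩ := hs
  have hx0 : x = 0 := span_eq_bot.mp hbot x hx
  exact hne x hx (by rw [hbot, hx0, span_zero_singleton])

end CyclicModule

theorem ideal_isPrincipal_of_map_isPrincipal_of_map_injective {R S : Type*} [CommRing R]
    [CommRing S] [IsLocalRing S] {f : R →+* S}
    (hf : Function.Injective (Ideal.map f : Ideal R → Ideal S)) {I : Ideal R}
    (h : (I.map f).IsPrincipal) : I.IsPrincipal := by
  obtain ⟨_, ⟨x, -, rfl⟩, hx⟩ : ∃ y ∈ f '' I, Ideal.span {y} = I.map f :=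
    exists_mem_span_singleton_eq_span_of_isPrincipal (I.nonempty.image f) h
  have hmap : I.map f = (Ideal.span {x}).map f := by
    rw [← hx, Ideal.map_span, Set.image_singleton]
  exact ⟨x, hf hmap⟩

theorem isLocalHom_algebraMap_localization_atPrime {R R' : Type*} [CommRing R] [CommRing R']
    [IsLocalRing R] [Algebra R R'] (P : Ideal R') [P.IsPrime] [P.LiesOver (maximalIdeal R)] :
    IsLocalHom (algebraMap R (Localization.AtPrime P)) where
  map_nonunit x hx := by
    rw [IsScalarTower.algebraMap_apply R R' (Localization.AtPrime P),
      IsLocalization.AtPrime.isUnit_to_map_iff _ P, Ideal.mem_primeCompl_iff,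
      ← Ideal.mem_of_liesOver P (maximalIdeal R)] at hx
    exact notMem_maximalIdeal.mp hx

theorem exists_isPrime_faithfullyFlat_localization_atPrime (R R' : Type*) [CommRing R]
    [CommRing R'] [IsLocalRing R] [Algebra R R'] [Module.FaithfullyFlat R R'] :
    ∃ (P : Ideal R') (_ : P.IsPrime), Module.FaithfullyFlat R (Localization.AtPrime P) := by
  obtain ⟨P, hP, _⟩ := (maximalIdeal R).exists_isPrime_liesOver_of_faithfullyFlat (B := R')
  have := isLocalHom_algebraMap_localization_atPrime (R := R) P
  exact ⟨P, hP, .of_flat_of_isLocalHom⟩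

theorem ideal_isPrincipal_of_map_isPrincipal_of_faithfullyFlat_general
    (R R' : Type*) [CommRing R] [CommRing R'] [IsLocalRing R]
    [Algebra R R'] [Module.FaithfullyFlat R R']
    (I : Ideal R) (h : (I.map (algebraMap R R')).IsPrincipal) :
    I.IsPrincipal := by
  obtain ⟨P, _, _⟩ := exists_isPrime_faithfullyFlat_localization_atPrime R R'
  have hP : (I.map (algebraMap R (Localization.AtPrime P))).IsPrincipal := by
    rw [IsScalarTower.algebraMap_eq R R' (Localization.AtPrime P), ← Ideal.map_map]
    exact h.map_ringHom _
  exact ideal_isPrincipal_of_map_isPrincipal_of_map_injective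
    Ideal.map_injective_of_faithfullyFlat hP

/-- **Danilov's lemma** (Lemma 3.3 of the paper).
Let `R → R'` be a faithfully flat homomorphism of Noetherian, integrally closed local
domains. Then any ideal `I` of `R` whose extension `I·R'` is a principal ideal of `R'`
is itself a principal ideal of `R`. -/
theorem ideal_isPrincipal_of_map_isPrincipal_of_faithfullyFlat
    (R R' : Type*) [CommRing R] [CommRing R'] [IsDomain R] [IsDomain R']
    [IsNoetherianRing R] [IsNoetherianRing R']
    [IsLocalRing R] [IsLocalRing R']
    [IsIntegrallyClosed R] [IsIntegrallyClosed R']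
    [Algebra R R'] [Module.FaithfullyFlat R R']
    (I : Ideal R) (h : (I.map (algebraMap R R')).IsPrincipal) :
    I.IsPrincipal := by
  exact ideal_isPrincipal_of_map_isPrincipal_of_faithfullyFlat_general R R' I h
end

section
/- Let R → R' be a faithfully flat homomorphism of Noetherian, integrally closed local domains. If R' is a unique factorization domain, then R is a unique factorization domain. -/
/-!
An irreducible `p` is prime as soon as every colon ideal `(p) : a` is principal: a generator `c`
divides `p`, so either `c` is a unit and `p ∣ a`, or `c` is associated to `p` and `p` divides every
`b` with `p ∣ a * b`. In a GCD monoid such colon ideals are principal, generated by `lcm p a / a`.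
Flat extension commutes with the formation of `(p) : a`, and principality of an ideal `I` descends
along a faithfully flat extension of a local ring with maximal ideal `m`: if `t` generates the
extension of `I`, then Nakayama's lemma yields a generator `x = t * u` of `I` with `u` outside the
extension of `m`.
-/

section Colon

variable {R : Type*} [CommSemiring R]

theorem mem_colon_span_singleton_singleton {p a x : R} :
    x ∈ (Ideal.span {p}).colon {a} ↔ p ∣ x * a := by
  rw [Submodule.mem_colon_singleton, smul_eq_mul, Ideal.mem_span_singleton]

theorem isPrincipal_colon_span_singleton_singleton [IsGCDMonoid R] (p a : R) :
    ((Ideal.span {p}).colon {a}).IsPrincipal := by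
  obtain ⟨_⟩ := ‹IsGCDMonoid R›
  obtain rfl | ha := eq_or_ne a 0
  · have colon_zero : (Ideal.span {p}).colon {0} = ⊤ := by simp
    exact colon_zero ▸ inferInstance
  obtain ⟨q, hq⟩ := dvd_lcm_right p a
  refine ⟨q, Ideal.ext fun x => ?_⟩
  calc x ∈ (Ideal.span {p}).colon {a}
      ↔ p ∣ x * a := mem_colon_span_singleton_singleton
    _ ↔ lcm p a ∣ x * a := by rw [lcm_dvd_iff, and_iff_left (dvd_mul_left a x)]
    _ ↔ q ∣ x := by rw [hq, mul_comm x a, mul_dvd_mul_iff_left ha]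
    _ ↔ x ∈ Ideal.span {q} := Ideal.mem_span_singleton.symm

theorem prime_of_irreducible_of_isPrincipal_colon {p : R} (hp : Irreducible p)
    (hcolon : ∀ a, ((Ideal.span {p}).colon {a}).IsPrincipal) : Prime p := by
  refine ⟨hp.ne_zero, hp.not_isUnit, fun a b hab => ?_⟩
  obtain ⟨c, hc⟩ := hcolon a
  have dvd_iff (x : R) : c ∣ x ↔ p ∣ x * a := by
    rw [← mem_colon_span_singleton_singleton, hc, Ideal.submodule_span_eq,
      Ideal.mem_span_singleton]
  have c_dvd_p : c ∣ p := (dvd_iff p).mpr (dvd_mul_right p a)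
  have c_dvd_b : c ∣ b := (dvd_iff b).mpr (mul_comm a b ▸ hab)
  obtain c_unit | p_assoc_c := hp.dvd_iff.mp c_dvd_p
  · exact .inl (c_unit.dvd_mul_left.mp ((dvd_iff c).mp dvd_rfl))
  · exact .inr (p_assoc_c.dvd.trans c_dvd_b)

end Colon

theorem wfDvdMonoid_of_injective_of_isLocalHom {M N F : Type*} [CommMonoidWithZero M]
    [CommMonoidWithZero N] [FunLike F M N] [MonoidWithZeroHomClass F M N] (f : F) [IsLocalHom f]
    (hf : Function.Injective f) [WfDvdMonoid N] : WfDvdMonoid M := by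
  have map_dvdNotUnit {a b : M} : DvdNotUnit a b → DvdNotUnit (f a) (f b) := by
    rintro ⟨ha, x, hx, rfl⟩
    exact ⟨(map_ne_zero_iff f hf).mpr ha, f x, mt (isUnit_of_map_unit f x) hx, map_mul f a x⟩
  exact ⟨Subrelation.wf map_dvdNotUnit (InvImage.wf f wellFounded_dvdNotUnit)⟩

section Algebra

variable {R S : Type*} [CommRing R] [CommRing S] [Algebra R S]

theorem map_colon_singleton_of_flat [Module.Flat R S] (J : Ideal R) (a : R) :
    (J.colon {a}).map (algebraMap R S) = (J.map (algebraMap R S)).colon {algebraMap R S a} := by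
  refine le_antisymm (Ideal.map_le_iff_le_comap.mpr fun r hr => ?_) fun u hu => ?_
  · rw [Ideal.mem_comap, Submodule.mem_colon_singleton, smul_eq_mul, ← map_mul]
    exact Ideal.mem_map_of_mem _ (Submodule.mem_colon_singleton.mp hr)
  -- Write `a * u = ∑ i, q i * w i` with `q i ∈ J`: by the equational criterion, this relation
  -- between `u` and the `w i` comes from relations over `R`, which exhibit `u` in the extension.
  obtain ⟨n, w, p, hwp⟩ := Submodule.mem_span_set'.mp (Submodule.mem_colon_singleton.mp hu)
  choose q hqJ hq using fun i => (p i).2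
  have a_mul_u : algebraMap R S a * u = ∑ i, algebraMap R S (q i) * w i := by
    simpa only [smul_eq_mul, ← hq, mul_comm] using hwp.symm
  have relation :
      ∑ i, (Fin.cons a (-q) : Fin (n + 1) → R) i • (Fin.cons u w : Fin (n + 1) → S) i = 0 := by
    simp only [Fin.sum_univ_succ, Fin.cons_zero, Fin.cons_succ, Pi.neg_apply, Algebra.smul_def,
      map_neg, neg_mul, Finset.sum_neg_distrib, a_mul_u, add_neg_cancel]
  obtain ⟨k, c, y, hc, hrel⟩ :=
    Module.Flat.isTrivialRelation_of_sum_smul_eq_zero (R := R) (M := S) relation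
  have c_mem (j : Fin k) : c 0 j ∈ J.colon {a} := by
    have hj : a * c 0 j = ∑ i, q i * c i.succ j := by
      simpa [Fin.sum_univ_succ, add_neg_eq_zero] using hrel j
    rw [Submodule.mem_colon_singleton, smul_eq_mul, mul_comm, hj]
    exact J.sum_mem fun i _ => J.mul_mem_right _ (hqJ i)
  have u_eq : u = ∑ j, algebraMap R S (c 0 j) * y j := by
    simpa only [Fin.cons_zero, Algebra.smul_def] using hc 0
  rw [u_eq]
  exact Ideal.sum_mem _ fun j _ => Ideal.mul_mem_right _ _ (Ideal.mem_map_of_mem _ (c_mem j))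

theorem dvd_of_dvd_mul_of_notMem_map_maximalIdeal [IsLocalRing R] [Module.Flat R S] {x y : R}
    {u : S} (h : algebraMap R S x ∣ u * algebraMap R S y)
    (hu : u ∉ (IsLocalRing.maximalIdeal R).map (algebraMap R S)) : x ∣ y := by
  have u_mem : u ∈ ((Ideal.span {x}).colon {y}).map (algebraMap R S) := by
    rwa [map_colon_singleton_of_flat, Ideal.map_span, Set.image_singleton,
      mem_colon_span_singleton_singleton]
  have colon_eq_top : (Ideal.span {x}).colon {y} = ⊤ := by
    by_contra hne
    exact hu (Ideal.map_mono (IsLocalRing.le_maximalIdeal hne) u_mem)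
  rwa [Submodule.colon_eq_top_iff_subset, Set.singleton_subset_iff, SetLike.mem_coe,
    Ideal.mem_span_singleton] at colon_eq_top

theorem le_of_map_le_map_of_faithfullyFlat [Module.FaithfullyFlat R S] {I J : Ideal R}
    (h : I.map (algebraMap R S) ≤ J.map (algebraMap R S)) : I ≤ J := by
  rw [← J.comap_map_eq_self_of_faithfullyFlat (B := S)]
  exact Ideal.map_le_iff_le_comap.mp h

theorem isPrincipal_of_isPrincipal_map_of_faithfullyFlat [IsLocalRing R]
    [Module.FaithfullyFlat R S] {I : Ideal R} (hI : (I.map (algebraMap R S)).IsPrincipal) :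
    I.IsPrincipal := by
  have I_fg : I.FG := .of_FG_map_of_faithfullyFlat (Submodule.IsPrincipal.fg hI)
  obtain ⟨t, ht : I.map (algebraMap R S) = Ideal.span {t}⟩ := hI
  let m := IsLocalRing.maximalIdeal R
  have exists_eq_mul (x : R) (hx : x ∈ I) : ∃ v, algebraMap R S x = t * v :=
    Ideal.mem_span_singleton.mp (ht ▸ Ideal.mem_map_of_mem (algebraMap R S) hx)
  by_cases! h : ∃ x ∈ I, ∃ u, algebraMap R S x = t * u ∧ u ∉ m.map (algebraMap R S)
  · obtain ⟨x, hxI, u, hxu, hum⟩ := h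
    refine ⟨x, le_antisymm (fun y hy => ?_) (I.span_singleton_le_iff_mem.mpr hxI)⟩
    obtain ⟨v, hyv⟩ := exists_eq_mul y hy
    have x_dvd_u_mul_y : algebraMap R S x ∣ u * algebraMap R S y := ⟨v, by rw [hxu, hyv]; ring⟩
    exact Ideal.mem_span_singleton.mpr
      (dvd_of_dvd_mul_of_notMem_map_maximalIdeal x_dvd_u_mul_y hum)
  · have I_le : I ≤ m * I := le_of_map_le_map_of_faithfullyFlat (S := S) <| by
      refine Ideal.map_le_iff_le_comap.mpr fun x hx => ?_
      obtain ⟨u, hxu⟩ := exists_eq_mul x hx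
      rw [Ideal.mem_comap, Ideal.map_mul, ht, hxu, mul_comm t u]
      exact Ideal.mul_mem_mul (h x hx u hxu) (Ideal.mem_span_singleton_self t)
    rw [Submodule.eq_bot_of_le_smul_of_le_jacobson_bot m I I_fg I_le
      (IsLocalRing.maximalIdeal_le_jacobson ⊥)]
    infer_instance

variable (S) in
theorem isPrincipal_colon_of_faithfullyFlat_of_isGCDMonoid [IsLocalRing R]
    [Module.FaithfullyFlat R S] [IsGCDMonoid S] (p a : R) :
    ((Ideal.span {p}).colon {a}).IsPrincipal := by
  refine isPrincipal_of_isPrincipal_map_of_faithfullyFlat (S := S) ?_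
  rw [map_colon_singleton_of_flat, Ideal.map_span, Set.image_singleton]
  exact isPrincipal_colon_span_singleton_singleton _ _

end Algebra

theorem uniqueFactorizationMonoid_of_faithfullyFlat_general
    (R R' : Type*) [CommRing R] [CommRing R'] [IsLocalRing R]
    [Algebra R R'] [Module.FaithfullyFlat R R'] [UniqueFactorizationMonoid R'] :
    UniqueFactorizationMonoid R := by
  have algebraMap_injective : Function.Injective (algebraMap R R') :=
    FaithfulSMul.algebraMap_injective R R'
  have : IsCancelMulZero R :=
    algebraMap_injective.isCancelMulZero _ (map_zero _) (map_mul _)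
  have : WfDvdMonoid R :=
    wfDvdMonoid_of_injective_of_isLocalHom (algebraMap R R') algebraMap_injective
  exact
    { irreducible_iff_prime := ⟨fun hp => prime_of_irreducible_of_isPrincipal_colon hp
        (isPrincipal_colon_of_faithfullyFlat_of_isGCDMonoid R' _), Prime.irreducible⟩ }

/-- (Lemma 3.3 of the paper, "in particular" part.)
Let `R → R'` be a faithfully flat homomorphism of Noetherian, integrally closed local
domains. If `R'` is a unique factorization domain, then so is `R`. -/
theorem uniqueFactorizationMonoid_of_faithfullyFlat
    (R R' : Type*) [CommRing R] [CommRing R'] [IsDomain R] [IsDomain R']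
    [IsNoetherianRing R] [IsNoetherianRing R']
    [IsLocalRing R] [IsLocalRing R']
    [IsIntegrallyClosed R] [IsIntegrallyClosed R']
    [Algebra R R'] [Module.FaithfullyFlat R R']
    [UniqueFactorizationMonoid R'] :
    UniqueFactorizationMonoid R :=
  uniqueFactorizationMonoid_of_faithfullyFlat_general R R'
end

section
/- Let R be a strictly henselian local ring, let R → A be an integral local homomorphism of local rings whose induced extension of residue fields k_R → k_A is purely inseparable, and let R → B be any local homomorphism of local rings. Then the tensor product A ⊗_R B is a local ring, and its residue field is a purely inseparable extension of the residue field k_B of B. -/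
open scoped TensorProduct
open IsLocalRing

/-!
As `A` is integral over `R`, every maximal ideal of `A ⊗[R] B` lies over the maximal ideals of `A`
and `B`. So the surjection `A ⊗[R] B → k_A ⊗[k_R] k_B`, whose kernel is generated by these two
ideals, is a local homomorphism, and `A ⊗[R] B` is local as soon as `k_A ⊗[k_R] k_B` is. If `q` is
the exponential characteristic of `k_R`, each element of `k_A ⊗[k_R] k_B` has some `q ^ n`-th power
in `k_B`, hence is nilpotent or a unit; the same power relation, lifted to `A ⊗[R] B`, shows that
its residue field is purely inseparable over `k_B`.
-/

theorem isLocalHom_of_surjective_of_ker_le_jacobson {R S : Type*} [CommRing R] [CommRing S]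
    {f : R →+* S} (hf : Function.Surjective f) (hker : RingHom.ker f ≤ Ideal.jacobson ⊥) :
    IsLocalHom f :=
  have := isLocalHom_of_le_jacobson_bot (RingHom.ker f) hker
  RingHom.isLocalHom_comp (RingHom.quotientKerEquivOfSurjective hf : R ⧸ RingHom.ker f →+* S)
    (Ideal.Quotient.mk (RingHom.ker f))

theorem isLocalRing_of_forall_pow_mem_range {K S : Type*} [Field K] [CommRing S] [Nontrivial S]
    (f : K →+* S) (hf : ∀ x : S, ∃ n ≠ 0, x ^ n ∈ f.range) : IsLocalRing S := by
  refine .of_isUnit_or_isUnit_one_sub_self fun x ↦ ?_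
  obtain ⟨n, hn, y, hy⟩ := hf x
  obtain rfl | hy₀ := eq_or_ne y 0
  · have hx : IsNilpotent x := ⟨n, by rw [← hy, map_zero]⟩
    exact .inr hx.isUnit_one_sub
  · exact .inl ((isUnit_pow_iff hn).1 (hy ▸ hy₀.isUnit.map f))

theorem isPurelyInseparable_residueField_map {R S : Type*} [CommRing R] [CommRing S]
    [IsLocalRing R] [IsLocalRing S] (f : R →+* S) [IsLocalHom f] (q : ℕ)
    [ExpChar (ResidueField R) q]
    (hf : ∀ x : S, ∃ (n : ℕ) (y : R), x ^ q ^ n - f y ∈ maximalIdeal S) :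
    (ResidueField.map f).IsPurelyInseparable := by
  let := (ResidueField.map f).toAlgebra
  refine (isPurelyInseparable_iff_pow_mem (ResidueField R) q).2 fun x ↦ ?_
  obtain ⟨x, rfl⟩ := residue_surjective x
  obtain ⟨n, y, hxy⟩ := hf x
  refine ⟨n, residue R y, ?_⟩
  rw [← residue_eq_zero_iff, map_sub, map_pow, sub_eq_zero] at hxy
  exact hxy.symm

section Field

variable {k K S : Type*} [Field k] [Field K] [CommRing S] [Algebra k K] [Algebra k S]
  [IsPurelyInseparable k K]

theorem exists_pow_expChar_pow_eq_one_tmul (q : ℕ) [ExpChar k q] (x : K ⊗[k] S) :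
    ∃ (n : ℕ) (s : S), x ^ q ^ n = 1 ⊗ₜ[k] s := by
  let e := Algebra.TensorProduct.comm k S K
  obtain ⟨n, s, hs⟩ :=
    IsPurelyInseparable.exists_pow_pow_mem_range_tensorProduct_of_expChar q (e.symm x)
  refine ⟨n, s, ?_⟩
  calc x ^ q ^ n = e (e.symm x ^ q ^ n) := by rw [map_pow, e.apply_symm_apply]
    _ = e (s ⊗ₜ[k] 1) := by rw [← hs]; rfl
    _ = 1 ⊗ₜ[k] s := Algebra.TensorProduct.comm_tmul ..

theorem isLocalRing_tensorProduct_of_isPurelyInseparable {L : Type*} [Field L] [Algebra k L] :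
    IsLocalRing (K ⊗[k] L) := by
  obtain ⟨q, _⟩ := ExpChar.exists k
  refine isLocalRing_of_forall_pow_mem_range
    (Algebra.TensorProduct.includeRight : L →ₐ[k] K ⊗[k] L).toRingHom fun x ↦ ?_
  obtain ⟨n, l, hx⟩ := exists_pow_expChar_pow_eq_one_tmul q x
  exact ⟨q ^ n, (expChar_pow_pos k q n).ne', l, hx.symm⟩

end Field

section MaximalIdeal

variable {R A B : Type*} [CommRing R] [CommRing A] [CommRing B] [IsLocalRing B]
  [Algebra R A] [Algebra R B] [Algebra.IsIntegral R A]

theorem comap_includeRight_eq_maximalIdeal (M : Ideal (A ⊗[R] B)) [M.IsMaximal] :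
    M.comap (Algebra.TensorProduct.includeRight : B →ₐ[R] A ⊗[R] B) = maximalIdeal B := by
  let := Algebra.TensorProduct.rightAlgebra (R := R) (A := A) (B := B)
  have : Algebra.IsIntegral B (A ⊗[R] B) := Algebra.IsPushout.isIntegral R B A _
  exact eq_maximalIdeal (Ideal.isMaximal_comap_of_isIntegral_of_isMaximal (R := B) M)

theorem comap_includeLeft_eq_maximalIdeal [IsLocalRing R] [IsLocalRing A]
    [IsLocalHom (algebraMap R B)] (M : Ideal (A ⊗[R] B)) [M.IsMaximal] :
    M.comap (Algebra.TensorProduct.includeLeft : A →ₐ[R] A ⊗[R] B) = maximalIdeal A := by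
  let P : Ideal A := M.comap (Algebra.TensorProduct.includeLeft : A →ₐ[R] A ⊗[R] B)
  have : P.IsPrime := Ideal.comap_isPrime _ M
  have hP : P.comap (algebraMap R A) = maximalIdeal R :=
    calc P.comap (algebraMap R A)
        = (M.comap (Algebra.TensorProduct.includeRight : B →ₐ[R] A ⊗[R] B)).comap
            (algebraMap R B) := by
          ext r
          simp [P, Ideal.mem_comap]
      _ = (maximalIdeal B).comap (algebraMap R B) := by rw [comap_includeRight_eq_maximalIdeal]
      _ = maximalIdeal R := maximalIdeal_comap (algebraMap R B)
  exact eq_maximalIdeal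
    (Ideal.isMaximal_of_isIntegral_of_isMaximal_comap P (hP ▸ maximalIdeal.isMaximal R))

end MaximalIdeal

section LocalRing

variable (R A B : Type*) [CommRing R] [CommRing A] [CommRing B]
  [IsLocalRing R] [IsLocalRing A] [IsLocalRing B] [Algebra R A] [Algebra R B]
  [IsLocalHom (algebraMap R A)] [IsLocalHom (algebraMap R B)]

/-- Reduction of `A ⊗[R] B` modulo the maximal ideals of both factors. The target is taken over the
residue field of `R`, rather than over `R`, so that results on field extensions apply to it. -/
noncomputable def tensorProductResidueMap :
    A ⊗[R] B →ₐ[R] ResidueField A ⊗[ResidueField R] ResidueField B :=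
  (Algebra.TensorProduct.mapOfCompatibleSMul (ResidueField R) R R _ _).comp
    (Algebra.TensorProduct.map (IsScalarTower.toAlgHom R A (ResidueField A))
      (IsScalarTower.toAlgHom R B (ResidueField B)))

theorem tensorProductResidueMap_tmul (a : A) (b : B) :
    tensorProductResidueMap R A B (a ⊗ₜ[R] b) = residue A a ⊗ₜ[ResidueField R] residue B b :=
  rfl

theorem tensorProductResidueMap_surjective :
    Function.Surjective (tensorProductResidueMap R A B) := by
  rw [tensorProductResidueMap, AlgHom.coe_comp]
  exact (Algebra.TensorProduct.mapOfCompatibleSMul_surjective (ResidueField R) R R _ _).comp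
    (Algebra.TensorProduct.map_surjective _ _ residue_surjective residue_surjective)

theorem ker_tensorProductResidueMap :
    RingHom.ker (tensorProductResidueMap R A B) =
      (maximalIdeal A).map (Algebra.TensorProduct.includeLeft : A →ₐ[R] A ⊗[R] B) ⊔
        (maximalIdeal B).map (Algebra.TensorProduct.includeRight : B →ₐ[R] A ⊗[R] B) := by
  have : TensorProduct.CompatibleSMul R (ResidueField R) (ResidueField A) (ResidueField B) :=
    .of_algebraMap_surjective _ _ residue_surjective
  have hinj := (Algebra.TensorProduct.equivOfCompatibleSMul (ResidueField R) R R
    (ResidueField A) (ResidueField B)).injective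
  calc _ = RingHom.ker (Algebra.TensorProduct.map (IsScalarTower.toAlgHom R A (ResidueField A))
        (IsScalarTower.toAlgHom R B (ResidueField B))) := RingHom.ker_comp_of_injective _ hinj
    _ = (RingHom.ker (residue A)).map _ ⊔ (RingHom.ker (residue B)).map _ :=
      Algebra.TensorProduct.map_ker _ _ residue_surjective residue_surjective
    _ = _ := by rw [ker_residue, ker_residue]

theorem isLocalHom_tensorProductResidueMap [Algebra.IsIntegral R A] :
    IsLocalHom (tensorProductResidueMap R A B).toRingHom := by
  refine isLocalHom_of_surjective_of_ker_le_jacobson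
    (tensorProductResidueMap_surjective R A B) (le_sInf fun M ⟨_, hM⟩ ↦ ?_)
  refine (ker_tensorProductResidueMap R A B).trans_le (sup_le ?_ ?_)
  · exact Ideal.map_le_iff_le_comap.2 (comap_includeLeft_eq_maximalIdeal M).ge
  · exact Ideal.map_le_iff_le_comap.2 (comap_includeRight_eq_maximalIdeal M).ge

theorem isLocalHom_includeRight_tensorProduct :
    IsLocalHom (Algebra.TensorProduct.includeRight : B →ₐ[R] A ⊗[R] B).toRingHom := by
  have : IsLocalHom ((tensorProductResidueMap R A B).toRingHom.comp
    (Algebra.TensorProduct.includeRight : B →ₐ[R] A ⊗[R] B).toRingHom) :=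
    RingHom.isLocalHom_comp (Algebra.TensorProduct.includeRight :
      ResidueField B →ₐ[ResidueField R] ResidueField A ⊗[ResidueField R] ResidueField B).toRingHom
      (residue B)
  exact isLocalHom_of_comp _ (tensorProductResidueMap R A B).toRingHom

end LocalRing

theorem isLocalRing_tensorProduct_of_integral_purelyInseparable_general
    (R A B : Type*) [CommRing R] [CommRing A] [CommRing B]
    [IsLocalRing R] [IsLocalRing A] [IsLocalRing B] [Algebra R A] [Algebra R B]
    [IsLocalHom (algebraMap R A)] [IsLocalHom (algebraMap R B)] [Algebra.IsIntegral R A]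
    (hins : (ResidueField.map (algebraMap R A)).IsPurelyInseparable) :
    ∃ (_ : IsLocalRing (A ⊗[R] B))
      (_ : IsLocalHom (Algebra.TensorProduct.includeRight : B →ₐ[R] A ⊗[R] B).toRingHom),
      (ResidueField.map
        (Algebra.TensorProduct.includeRight : B →ₐ[R] A ⊗[R] B).toRingHom).IsPurelyInseparable := by
  have : IsPurelyInseparable (ResidueField R) (ResidueField A) :=
    RingHom.isPurelyInseparable_algebraMap_iff.1 hins
  let φ := tensorProductResidueMap R A B
  have := isLocalRing_tensorProduct_of_isPurelyInseparable
    (k := ResidueField R) (K := ResidueField A) (L := ResidueField B)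
  have := isLocalHom_tensorProductResidueMap R A B
  have hlocal : IsLocalRing (A ⊗[R] B) := φ.toRingHom.domain_isLocalRing
  have hright := isLocalHom_includeRight_tensorProduct R A B
  obtain ⟨q, _⟩ := ExpChar.exists (ResidueField R)
  have : ExpChar (ResidueField B) q :=
    expChar_of_injective_algebraMap (algebraMap (ResidueField R) (ResidueField B)).injective q
  refine ⟨hlocal, hright, isPurelyInseparable_residueField_map _ q fun x ↦ ?_⟩
  obtain ⟨n, l, hx⟩ := exists_pow_expChar_pow_eq_one_tmul q (φ x)
  obtain ⟨b, rfl⟩ := residue_surjective l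
  have hker : x ^ q ^ n - 1 ⊗ₜ b ∈ RingHom.ker φ := by
    rw [RingHom.mem_ker, map_sub, map_pow, hx, tensorProductResidueMap_tmul, map_one, sub_self]
  exact ⟨n, b, le_maximalIdeal (RingHom.ker_ne_top φ) hker⟩

/-- (Lemma 4.2 of the paper.)
Let `R` be a strictly henselian local ring (henselian with separably closed residue
field), let `R → A` be an integral local homomorphism of local rings whose induced
residue field extension `k_R → k_A` is purely inseparable, and let `R → B` be any local
homomorphism of local rings. Then `A ⊗_R B` is a local ring, and its residue field is a
purely inseparable extension of the residue field `k_B` of `B` (via the natural map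
`B → A ⊗_R B`, which is a local homomorphism). -/
theorem isLocalRing_tensorProduct_of_integral_purelyInseparable
    (R A B : Type*) [CommRing R] [CommRing A] [CommRing B]
    [IsLocalRing A] [IsLocalRing B]
    [HenselianLocalRing R] [IsSepClosed (ResidueField R)]
    [Algebra R A] [Algebra R B]
    [IsLocalHom (algebraMap R A)] [IsLocalHom (algebraMap R B)]
    [Algebra.IsIntegral R A]
    (hins :
      letI : Algebra (ResidueField R) (ResidueField A) :=
        (ResidueField.map (algebraMap R A)).toAlgebra
      IsPurelyInseparable (ResidueField R) (ResidueField A)) :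
    ∃ _hloc : IsLocalRing (A ⊗[R] B),
      ∃ _hl : IsLocalHom
          (Algebra.TensorProduct.includeRight : B →ₐ[R] A ⊗[R] B).toRingHom,
        letI : Algebra (ResidueField B) (ResidueField (A ⊗[R] B)) :=
          (ResidueField.map
            (Algebra.TensorProduct.includeRight : B →ₐ[R] A ⊗[R] B).toRingHom).toAlgebra
        IsPurelyInseparable (ResidueField B) (ResidueField (A ⊗[R] B)) :=
  isLocalRing_tensorProduct_of_integral_purelyInseparable_general R A B hins
end

section
/- Let R be a Noetherian, strictly henselian local domain, let R → R' be a smooth ring map, and let 𝔭 be a prime ideal of R' containing the extended ideal m_R·R'. Then the localization R'_𝔭 is geometrically unibranch; concretely: R'_𝔭 is a domain, and the integral closure of R'_𝔭 in its fraction field is a local ring whose residue field is a purely inseparable extension of the residue field of R'_𝔭. -/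
open IsLocalRing

universe u

/-!
Around `𝔭` the algebra `R'` is étale over a polynomial ring `P = R[X₁, …, Xₙ]`. Put `A = R'_𝔭`,
`K = Frac R` and `F = Frac P`. Since `K[X]` is normal, the integral closure of `P` in `F` is
generated by that of `R` in `K`; since integral closure commutes with étale base change and
localization, the integral closure `C` of `A` in `A ⊗[P] F` is generated over `A` by that of `R` in
`K`. If `R` is geometrically unibranch, every generator has a power of exponent a power of the
residual exponential characteristic which lies in the image of `A` modulo `rad (𝔪_A C)`, and such
elements form a subalgebra; hence `C` is local with purely inseparable residue field extension. As
`C` has no nontrivial idempotents, the finite reduced `F`-algebra `A ⊗[P] F` is a field, and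
flatness of `A` over `P` makes it the fraction field of `A`.

A strictly henselian domain `R` is geometrically unibranch because a domain integral over a
henselian local ring is local: after a suitable étale base change a prime over `𝔪_R` is cut out by
an idempotent, and sections of étale algebras lift from the residue field.
-/

open TensorProduct

section Henselian

variable {R : Type u} [CommRing R] [HenselianLocalRing R]

theorem exists_standardEtalePair_hasMap_lift {K : Type u} [Field K] [Algebra R K]
    (hK : Function.Surjective (algebraMap R K)) (Q : StandardEtalePair R) {x : K}
    (hx : Q.HasMap x) : ∃ a : R, Q.HasMap a ∧ algebraMap R K a = x := by
  have henselian : ∀ {K : Type u} [Field K] (φ : R →+* K), Function.Surjective φ →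
      ∀ f : Polynomial R, f.Monic → ∀ x : K, f.eval₂ φ x = 0 →
        f.derivative.eval₂ φ x ≠ 0 → ∃ a : R, f.IsRoot a ∧ φ a = x :=
    ((HenselianLocalRing.TFAE R).out 0 2 rfl rfl).mp ‹_›
  obtain ⟨a, ha, rfl⟩ := henselian (algebraMap R K) hK Q.f Q.monic_f x hx.1
    hx.isUnit_derivative_f.ne_zero
  refine ⟨a, ⟨ha, ?_⟩, rfl⟩
  have := IsLocalHom.of_surjective (algebraMap R K) hK
  exact .of_map (algebraMap R K) _ (by simpa [Polynomial.aeval_algebraMap_apply] using hx.2)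

theorem exists_algHom_lift_of_isStandardEtale {S : Type*} {K : Type u} [CommRing S] [Algebra R S]
    [Algebra.IsStandardEtale R S] [Field K] [Algebra R K]
    (hK : Function.Surjective (algebraMap R K)) (ψ : S →ₐ[R] K) :
    ∃ σ : S →ₐ[R] R, (Algebra.ofId R K).comp σ = ψ := by
  have 𝓟 := Classical.ofNonempty (α := StandardEtalePresentation R S)
  obtain ⟨a, ha, hax⟩ := exists_standardEtalePair_hasMap_lift hK 𝓟.P (𝓟.hasMap.map ψ)
  refine ⟨(𝓟.lift a ha).comp 𝓟.equivRing, ?_⟩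
  have h : (Algebra.ofId R K).comp (𝓟.lift a ha) = ψ.comp 𝓟.equivRing.symm :=
    StandardEtalePair.hom_ext (by simp [Algebra.ofId_apply, hax])
  rw [← AlgHom.comp_assoc, h, AlgHom.comp_assoc]
  simp

theorem exists_algHom_lift_of_etale {E : Type*} {K : Type u} [CommRing E] [Algebra R E]
    [Algebra.Etale R E] [Field K] [Algebra R K]
    (hK : Function.Surjective (algebraMap R K)) (ψ : E →ₐ[R] K) :
    ∃ σ : E →ₐ[R] R, (Algebra.ofId R K).comp σ = ψ := by
  have := RingHom.ker_isPrime ψ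
  obtain ⟨f, hf, _⟩ := Algebra.IsEtaleAt.exists_isStandardEtale (R := R) (RingHom.ker ψ)
  obtain ⟨σ, hσ⟩ := exists_algHom_lift_of_isStandardEtale hK
    (IsLocalization.Away.liftAlgHom (S := Localization.Away f) f (f := ψ)
      (isUnit_iff_ne_zero.mpr hf))
  refine ⟨σ.comp (IsScalarTower.toAlgHom R E _), ?_⟩
  rw [← AlgHom.comp_assoc, hσ]
  ext x
  simp

theorem exists_comap_maximalIdeal_eq_of_etale {E : Type u} [CommRing E] [Algebra R E]
    [Algebra.Etale R E] (P : Ideal E) [P.IsPrime] [P.LiesOver (maximalIdeal R)]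
    (hP : Function.Bijective (Ideal.ResidueField.mapₐ (maximalIdeal R) P (Algebra.ofId _ _)
      (P.over_def (maximalIdeal R)))) :
    ∃ σ : E →ₐ[R] R, (maximalIdeal R).comap σ = P := by
  have hK : Function.Surjective (algebraMap R P.ResidueField) := fun y ↦ by
    obtain ⟨z, rfl⟩ := hP.2 y
    obtain ⟨r, rfl⟩ := Ideal.algebraMap_residueField_surjective (maximalIdeal R) z
    exact ⟨r, by simp⟩
  obtain ⟨σ, hσ⟩ := exists_algHom_lift_of_etale hK (IsScalarTower.toAlgHom R E P.ResidueField)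
  refine ⟨σ, ?_⟩
  calc (maximalIdeal R).comap σ
      = RingHom.ker ((Algebra.ofId R P.ResidueField).comp σ) := by
        rw [← ker_eq_maximalIdeal _ hK]; rfl
    _ = P := by rw [hσ]; exact P.ker_algebraMap_residueField

theorem eq_of_liesOver_maximalIdeal_of_finite {S : Type*} [CommRing S] [IsDomain S] [Algebra R S]
    [Module.Finite R S] (q q' : Ideal S) [q.IsPrime] [q'.IsPrime]
    [q.LiesOver (maximalIdeal R)] [q'.LiesOver (maximalIdeal R)] : q = q' := by
  obtain ⟨E, _, _, _, P, _, _, e, he, P', _, _, hP', heP', hbij, -, huniq⟩ :=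
    Algebra.exists_etale_isIdempotentElem_forall_liesOver_eq (maximalIdeal R) q
  obtain ⟨σ, hσ⟩ := exists_comap_maximalIdeal_eq_of_etale P hbij
  let ρ : E ⊗[R] S →ₐ[R] S :=
    Algebra.TensorProduct.lift ((Algebra.ofId R S).comp σ) (AlgHom.id R S) fun _ _ ↦ .all _ _
  have liesOver_comap (Q : Ideal S) [Q.LiesOver (maximalIdeal R)] : (Q.comap ρ).LiesOver P := by
    constructor
    rw [← hσ, Q.over_def (maximalIdeal R)]
    ext x
    simp [Ideal.under, ρ, Algebra.ofId_apply]
  have comap_comap (Q : Ideal S) :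
      (Q.comap ρ).comap Algebra.TensorProduct.includeRight.toRingHom = Q := by
    ext x
    simp [ρ]
  have := liesOver_comap q
  have := liesOver_comap q'
  have hq : P' = q.comap ρ := Ideal.eq_of_comap_eq_comap_of_bijective_residueFieldMap hbij _ _
    (hP'.trans (comap_comap q).symm)
  have hρe : ρ e = 1 := (IsIdempotentElem.iff_eq_zero_or_one.mp (he.map ρ)).resolve_left fun h ↦
    heP' (by simp [hq, h])
  have hq' : q'.comap ρ = P' := huniq _ inferInstance inferInstance (by simp [hρe, q'.one_notMem])
  rw [← comap_comap q, ← comap_comap q', hq', hq]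

variable (R)

theorem isLocalRing_of_finite_of_henselian (S : Type*) [CommRing S] [IsDomain S] [Algebra R S]
    [Module.Finite R S] : IsLocalRing S := by
  have liesOver (q : Ideal S) (hq : q.IsMaximal) : q.LiesOver (maximalIdeal R) :=
    ⟨(eq_maximalIdeal (Ideal.isMaximal_comap_of_isIntegral_of_isMaximal q)).symm⟩
  obtain ⟨q, hq⟩ := Ideal.exists_maximal S
  refine .of_unique_max_ideal ⟨q, hq, fun q' hq' ↦ ?_⟩
  have := liesOver q hq
  have := liesOver q' hq'
  exact eq_of_liesOver_maximalIdeal_of_finite (R := R) q' q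

theorem isLocalRing_of_isIntegral_of_henselian (S : Type*) [CommRing S] [IsDomain S] [Algebra R S]
    [Algebra.IsIntegral R S] : IsLocalRing S := by
  refine .of_isUnit_or_isUnit_one_sub_self fun x ↦ ?_
  let T := Algebra.adjoin R {x}
  have : Module.Finite R T :=
    ⟨(Submodule.fg_top _).mpr (Algebra.IsIntegral.isIntegral (R := R) x).fg_adjoin_singleton⟩
  have := isLocalRing_of_finite_of_henselian R T
  exact (isUnit_or_isUnit_one_sub_self (⟨x, Algebra.self_mem_adjoin_singleton R x⟩ : T)).imp
    (·.map T.val) (·.map T.val)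

end Henselian

section ResidualPerfectClosure

/-- `C` is a local `A`-algebra, via a local homomorphism, whose residue field is purely inseparable
over that of `A`; for `C` the normalization of `A` this is the unibranch condition. The residue
field of `C` carries Mathlib's algebra structure, equal to that of `ResidueField.map` by
`toAlgebra_residueFieldMap`. -/
structure IsResiduallyPurelyInseparable (A C : Type*) [CommRing A] [IsLocalRing A] [CommRing C]
    [Algebra A C] : Prop where
  isLocalRing : IsLocalRing C
  isLocalHom : IsLocalHom (algebraMap A C)
  isPurelyInseparable : IsPurelyInseparable (ResidueField A) (ResidueField C)

variable {A C : Type*} [CommRing A] [IsLocalRing A] [CommRing C] [Algebra A C]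

theorem toAlgebra_residueFieldMap [IsLocalRing C] [IsLocalHom (algebraMap A C)] :
    (ResidueField.map (algebraMap A C)).toAlgebra = ResidueField.instAlgebra :=
  Algebra.algebra_ext _ _ fun _ ↦ rfl

theorem map_maximalIdeal_le_of_isMaximal [Algebra.IsIntegral A C] (M : Ideal C) [M.IsMaximal] :
    (maximalIdeal A).map (algebraMap A C) ≤ M :=
  Ideal.map_le_iff_le_comap.mpr
    (eq_maximalIdeal (Ideal.isMaximal_comap_of_isIntegral_of_isMaximal M)).ge

theorem radical_map_maximalIdeal [Algebra.IsIntegral A C] [IsLocalRing C] :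
    ((maximalIdeal A).map (algebraMap A C)).radical = maximalIdeal C := by
  refine le_antisymm (Ideal.IsPrime.radical_le_iff inferInstance |>.mpr
    (map_maximalIdeal_le_of_isMaximal _)) ?_
  rw [Ideal.radical_eq_sInf]
  refine le_sInf fun q ⟨hq, _⟩ ↦ (eq_maximalIdeal ?_).ge
  refine Ideal.isMaximal_of_isIntegral_of_isMaximal_comap (R := A) q ?_
  rw [← (maximalIdeal.isMaximal A).eq_of_le (Ideal.comap_ne_top _ (Ideal.IsPrime.ne_top ‹_›))
    (Ideal.map_le_iff_le_comap.mp hq)]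
  infer_instance

theorem expChar_quotient_of_map_maximalIdeal_le (p : ℕ) [ExpChar (ResidueField A) p] {J : Ideal C}
    [Nontrivial (C ⧸ J)] (hJ : (maximalIdeal A).map (algebraMap A C) ≤ J) : ExpChar (C ⧸ J) p :=
  let φ : ResidueField A →+* C ⧸ J :=
    Ideal.quotientMap J (algebraMap A C) (Ideal.map_le_iff_le_comap.mp hJ)
  expChar_of_injective_ringHom φ.injective p

variable (p : ℕ) [ExpChar (ResidueField A) p]

theorem add_pow_expChar_pow_sub_mem {J : Ideal C}
    (hJ : (maximalIdeal A).map (algebraMap A C) ≤ J) (x y : C) (n : ℕ) :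
    (x + y) ^ p ^ n - (x ^ p ^ n + y ^ p ^ n) ∈ J := by
  rw [← Ideal.Quotient.eq]
  rcases subsingleton_or_nontrivial (C ⧸ J)
  · exact Subsingleton.elim _ _
  · have := expChar_quotient_of_map_maximalIdeal_le p hJ
    simp only [map_add, map_pow, add_pow_expChar_pow]

variable (A C) in
/-- The elements of `C` of which some `p`-power-th power comes from `A` modulo the radical of
`𝔪_A C`. When `A` and `C` are fields this is the relative perfect closure of `A` in `C`. -/
def residualPerfectClosure : Subalgebra A C where
  carrier := {c | ∃ (n : ℕ) (a : A),
    c ^ p ^ n - algebraMap A C a ∈ ((maximalIdeal A).map (algebraMap A C)).radical}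
  algebraMap_mem' a := ⟨0, a, by simp⟩
  add_mem' := by
    rintro x y ⟨n, a, ha⟩ ⟨m, b, hb⟩
    refine ⟨n + m, a ^ p ^ m + b ^ p ^ n, ?_⟩
    have hxy := add_pow_expChar_pow_sub_mem (A := A) p Ideal.le_radical x y (n + m)
    rw [← Ideal.Quotient.eq] at ha hb hxy ⊢
    simp only [map_pow, map_add] at ha hb hxy ⊢
    rw [hxy, ← ha, ← hb, ← pow_mul, ← pow_mul, ← pow_add, ← pow_add, add_comm m n]
  mul_mem' := by
    rintro x y ⟨n, a, ha⟩ ⟨m, b, hb⟩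
    refine ⟨n + m, a ^ p ^ m * b ^ p ^ n, ?_⟩
    rw [← Ideal.Quotient.eq] at ha hb ⊢
    simp only [map_pow, map_mul] at ha hb ⊢
    rw [mul_pow, ← ha, ← hb, ← pow_mul, ← pow_mul, ← pow_add, ← pow_add, add_comm m n]

theorem IsResiduallyPurelyInseparable.residualPerfectClosure_eq_top [Algebra.IsIntegral A C]
    (h : IsResiduallyPurelyInseparable A C) : residualPerfectClosure A C p = ⊤ := by
  have := h.isLocalRing
  have := h.isLocalHom
  refine eq_top_iff.mpr fun c _ ↦ ?_
  obtain ⟨n, y, hy⟩ :=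
    (isPurelyInseparable_iff_pow_mem _ p).mp h.isPurelyInseparable (residue C c)
  obtain ⟨a, rfl⟩ := residue_surjective y
  refine ⟨n, a, ?_⟩
  rw [radical_map_maximalIdeal, ← residue_eq_zero_iff, map_sub, map_pow, ← hy,
    ResidueField.algebraMap_residue, sub_self]

theorem isLocalRing_of_residualPerfectClosure_eq_top [Algebra.IsIntegral A C] [Nontrivial C]
    (h : residualPerfectClosure A C p = ⊤) : IsLocalRing C := by
  have pow_sub_mem (c : C) : ∃ (n : ℕ) (a : A), ∀ M : Ideal C, M.IsMaximal →
      c ^ p ^ n - algebraMap A C a ∈ M := by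
    obtain ⟨n, a, ha⟩ : c ∈ residualPerfectClosure A C p := h ▸ Algebra.mem_top
    exact ⟨n, a, fun M hM ↦
      hM.isPrime.radical_le_iff.mpr (map_maximalIdeal_le_of_isMaximal M) ha⟩
  have algebraMap_mem_iff (M : Ideal C) [M.IsMaximal] (a : A) :
      algebraMap A C a ∈ M ↔ a ∈ maximalIdeal A := by
    rw [← Ideal.mem_comap, eq_maximalIdeal (Ideal.isMaximal_comap_of_isIntegral_of_isMaximal M)]
  obtain ⟨M, hM⟩ := Ideal.exists_maximal C
  refine .of_unique_max_ideal ⟨M, hM, fun M' hM' ↦ hM'.eq_of_le hM.ne_top fun c hc ↦ ?_⟩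
  obtain ⟨n, a, ha⟩ := pow_sub_mem c
  have ha' : a ∈ maximalIdeal A := by
    rw [← algebraMap_mem_iff M', ← Submodule.sub_mem_iff_right _ ?_]
    · exact ha M' hM'
    · exact Ideal.pow_mem_of_mem _ hc _ (expChar_pow_pos (ResidueField A) p n)
  refine hM.isPrime.mem_of_pow_mem (p ^ n) ?_
  rw [← Submodule.sub_mem_iff_left _ ((algebraMap_mem_iff M a).mpr ha')]
  exact ha M hM

theorem IsResiduallyPurelyInseparable.of_residualPerfectClosure_eq_top [Algebra.IsIntegral A C]
    [Nontrivial C] (h : residualPerfectClosure A C p = ⊤) :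
    IsResiduallyPurelyInseparable A C := by
  have := isLocalRing_of_residualPerfectClosure_eq_top p h
  have : IsLocalHom (algebraMap A C) := ((local_hom_TFAE (algebraMap A C)).out 0 2).mpr
    (map_maximalIdeal_le_of_isMaximal _)
  refine ⟨‹_›, ‹_›, (isPurelyInseparable_iff_pow_mem _ p).mpr fun x ↦ ?_⟩
  obtain ⟨c, rfl⟩ := residue_surjective x
  obtain ⟨n, a, ha⟩ : c ∈ residualPerfectClosure A C p := h ▸ Algebra.mem_top
  refine ⟨n, residue A a, ?_⟩
  rw [radical_map_maximalIdeal, ← residue_eq_zero_iff, map_sub, sub_eq_zero, map_pow] at ha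
  exact ha.symm

theorem map_mem_residualPerfectClosure {R N : Type*} [CommRing R] [IsLocalRing R]
    [ExpChar (ResidueField R) p] [Algebra R A] [IsLocalHom (algebraMap R A)] [CommRing N]
    [Algebra R N] [Algebra R C] [IsScalarTower R A C] (f : N →ₐ[R] C) {x : N}
    (hx : x ∈ residualPerfectClosure R N p) : f x ∈ residualPerfectClosure A C p := by
  obtain ⟨n, r, k, hk⟩ := hx
  refine ⟨n, algebraMap R A r, k, ?_⟩
  have hle : ((maximalIdeal R).map (algebraMap R N)).map (f : N →+* C) ≤
      (maximalIdeal A).map (algebraMap A C) := by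
    rw [Ideal.map_map, f.comp_algebraMap, IsScalarTower.algebraMap_eq R A C, ← Ideal.map_map]
    exact Ideal.map_mono (((local_hom_TFAE (algebraMap R A)).out 0 2).mp ‹_›)
  simpa [← IsScalarTower.algebraMap_apply] using hle (Ideal.mem_map_of_mem f hk)

end ResidualPerfectClosure

/-- A local ring is geometrically unibranch if it is a domain whose integral closure in its
fraction field is local with purely inseparable residue field extension. -/
structure IsGeometricallyUnibranch (A : Type*) [CommRing A] [IsLocalRing A] : Prop where
  isDomain : IsDomain A
  isResiduallyPurelyInseparable :
    IsResiduallyPurelyInseparable A (integralClosure A (FractionRing A))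

theorem IsResiduallyPurelyInseparable.of_integralClosure_le_adjoin {R K A L : Type*}
    [CommRing R] [IsLocalRing R] [CommRing K] [Algebra R K] [CommRing A] [IsLocalRing A]
    [Algebra R A] [IsLocalHom (algebraMap R A)] [CommRing L] [Nontrivial L] [Algebra A L]
    [Algebra R L] [IsScalarTower R A L] (g : K →ₐ[R] L)
    (hg : integralClosure A L ≤ Algebra.adjoin A (g '' integralClosure R K))
    (h : IsResiduallyPurelyInseparable R (integralClosure R K)) :
    IsResiduallyPurelyInseparable A (integralClosure A L) := by
  obtain ⟨p, _⟩ := ExpChar.exists (ResidueField R)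
  have : ExpChar (ResidueField A) p :=
    expChar_of_injective_ringHom (ResidueField.map (algebraMap R A)).injective p
  let f : integralClosure R K →ₐ[R] integralClosure A L :=
    (g.comp (integralClosure R K).val).codRestrict ((integralClosure A L).restrictScalars R)
      fun x ↦ (x.2.map g).tower_top
  have hf (x : integralClosure R K) : f x ∈ residualPerfectClosure A (integralClosure A L) p :=
    map_mem_residualPerfectClosure p f (h.residualPerfectClosure_eq_top p ▸ Algebra.mem_top)
  have hle : integralClosure A L ≤
      (residualPerfectClosure A (integralClosure A L) p).map (integralClosure A L).val := by
    refine hg.trans (Algebra.adjoin_le ?_)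
    rintro _ ⟨x, hx, rfl⟩
    exact ⟨_, hf ⟨x, hx⟩, rfl⟩
  refine .of_residualPerfectClosure_eq_top p (eq_top_iff.mpr fun y _ ↦ ?_)
  obtain ⟨z, hz, hzy⟩ := hle y.2
  exact Subtype.ext hzy ▸ hz

theorem isGeometricallyUnibranch_of_isFractionRing {A L : Type*} [CommRing A] [IsLocalRing A]
    [IsDomain A] [Field L] [Algebra A L] [IsFractionRing A L]
    (h : IsResiduallyPurelyInseparable A (integralClosure A L)) : IsGeometricallyUnibranch A where
  isDomain := ‹_›
  isResiduallyPurelyInseparable := by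
    let e := (FractionRing.algEquiv A L).symm
    refine .of_integralClosure_le_adjoin (e : L →ₐ[A] FractionRing A) (fun y hy ↦ ?_) h
    refine Algebra.subset_adjoin ⟨e.symm y, ?_, e.apply_symm_apply y⟩
    exact IsIntegral.map e.symm hy

theorem eq_zero_or_eq_one_of_isIdempotentElem {A : Type*} [CommRing A]
    [IsLocalRing A] {e : A} (he : IsIdempotentElem e) : e = 0 ∨ e = 1 := by
  have h : e * (1 - e) = 0 := by rw [mul_one_sub, he.eq, sub_self]
  rcases isUnit_or_isUnit_one_sub_self e with hu | hu
  · exact .inr (sub_eq_zero.mp (hu.mul_right_eq_zero.mp h)).symm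
  · exact .inl (hu.mul_left_eq_zero.mp h)

theorem isField_of_forall_isIdempotentElem {L : Type*} [CommRing L] [Nontrivial L]
    [IsArtinianRing L] [IsReduced L] (h : ∀ e : L, IsIdempotentElem e → e = 0 ∨ e = 1) :
    IsField L := by
  have := IsArtinianRing.isSemisimpleRing_of_isReduced L
  refine ⟨exists_pair_ne L, mul_comm, fun {x} hx ↦ IsUnit.exists_right_inv ?_⟩
  obtain ⟨e, he, hxe⟩ := IsSemisimpleRing.ideal_eq_span_idempotent (Ideal.span {x})
  rcases h e he with rfl | rfl
  · exact absurd (by simpa using hxe) hx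
  · exact Ideal.span_singleton_eq_top.mp (by simpa using hxe)

theorem isField_of_isLocalRing_integralClosure (A : Type*) {L : Type*} [CommRing A] [CommRing L]
    [Algebra A L] [IsLocalRing (integralClosure A L)] [IsArtinianRing L] [IsReduced L] :
    IsField L := by
  have : Nontrivial L := (Subtype.val_injective (p := (· ∈ integralClosure A L))).nontrivial
  refine isField_of_forall_isIdempotentElem fun e he ↦ ?_
  have hint : e ∈ integralClosure A L :=
    ⟨Polynomial.X ^ 2 - Polynomial.X, by monicity!, by simp [pow_two, he.eq]⟩
  exact (eq_zero_or_eq_one_of_isIdempotentElem (e := (⟨e, hint⟩ : integralClosure A L))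
    (Subtype.ext he)).imp (congrArg Subtype.val) (congrArg Subtype.val)

theorem integralClosure_le_adjoin_trans {K F L R P A : Type*} [CommRing K] [CommRing F] [CommRing L]
    [CommRing R] [CommRing P] [CommRing A] [Algebra R K] [Algebra R F] [Algebra P F]
    [Algebra R P] [IsScalarTower R P F] [Algebra P L] [Algebra A L] [Algebra R L] [Algebra P A]
    [IsScalarTower P A L] [IsScalarTower R P L] {φ : K →ₐ[R] F} {ψ : F →ₐ[P] L}
    (hφ : integralClosure P F ≤ Algebra.adjoin P (φ '' integralClosure R K))
    (hψ : integralClosure A L ≤ Algebra.adjoin A (ψ '' integralClosure P F)) :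
    integralClosure A L ≤
      Algebra.adjoin A ((ψ.restrictScalars R).comp φ '' integralClosure R K) := by
  refine hψ.trans (Algebra.adjoin_le ?_)
  rw [AlgHom.coe_comp, Set.image_comp, Set.image_subset_iff]
  refine hφ.trans (?_ : _ ≤ ((Algebra.adjoin A _).restrictScalars P).comap ψ)
  exact Algebra.adjoin_le fun y hy ↦ Algebra.subset_adjoin (Set.mem_image_of_mem ψ hy)

theorem integralClosure_tensorProduct_le_adjoin {P A F : Type*} [CommRing P] [CommRing A]
    [CommRing F] [Algebra P A] [Algebra P F]
    (h : Function.Surjective (TensorProduct.toIntegralClosure P A F)) :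
    integralClosure A (A ⊗[P] F) ≤ Algebra.adjoin A
      ((Algebra.TensorProduct.includeRight : F →ₐ[P] A ⊗[P] F) '' integralClosure P F) := by
  intro z hz
  obtain ⟨t, ht⟩ := h ⟨z, hz⟩
  obtain rfl : (toIntegralClosure P A F t : A ⊗[P] F) = z := congrArg Subtype.val ht
  clear ht hz
  induction t with
  | zero => simp
  | add x y hx hy => simpa using add_mem hx hy
  | tmul a y =>
    have hay : (toIntegralClosure P A F (a ⊗ₜ y) : A ⊗[P] F) = a • (1 ⊗ₜ (y : F)) := by
      simp [toIntegralClosure, TensorProduct.smul_tmul']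
    rw [hay]
    exact Subalgebra.smul_mem _ (Algebra.subset_adjoin (Set.mem_image_of_mem _ y.2)) a

section MvPolynomial

attribute [local instance] MvPolynomial.algebraMvPolynomial

variable {σ R K : Type*} [CommRing R]

theorem mem_adjoin_image_C_of_isIntegral [CommRing K] [Algebra R K] {z : MvPolynomial σ K}
    (hz : IsIntegral (MvPolynomial σ R) z) :
    z ∈ Algebra.adjoin (MvPolynomial σ R)
      ((MvPolynomial.C : K →+* MvPolynomial σ K) '' (integralClosure R K : Set K)) := by
  rw [MvPolynomial.isIntegral_iff_isIntegral_coeff] at hz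
  rw [z.as_sum]
  refine Subalgebra.sum_mem _ fun s _ ↦ ?_
  have hs : MvPolynomial.monomial s (z.coeff s) = MvPolynomial.C (z.coeff s) *
      algebraMap (MvPolynomial σ R) (MvPolynomial σ K) (MvPolynomial.monomial s 1) := by
    simp [MvPolynomial.C_mul_monomial]
  rw [hs]
  exact mul_mem (Algebra.subset_adjoin (Set.mem_image_of_mem _ (hz s)))
    (Subalgebra.algebraMap_mem _ _)

variable {F : Type*} [IsDomain R] [Field K] [Algebra R K] [IsFractionRing R K] [Field F]
  [Algebra (MvPolynomial σ R) F] [IsFractionRing (MvPolynomial σ R) F]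

theorem isFractionRing_mvPolynomial [Algebra (MvPolynomial σ K) F]
    [IsScalarTower (MvPolynomial σ R) (MvPolynomial σ K) F] : IsFractionRing (MvPolynomial σ K) F :=
  IsFractionRing.isFractionRing_of_isDomain_of_isLocalization
    ((nonZeroDivisors R).map (MvPolynomial.C (σ := σ))) _ _

theorem integralClosure_mvPolynomial_le_adjoin [Algebra R F]
    [IsScalarTower R (MvPolynomial σ R) F] (φ : K →ₐ[R] F) :
    integralClosure (MvPolynomial σ R) F ≤
      Algebra.adjoin (MvPolynomial σ R) (φ '' integralClosure R K) := by
  let Φ : MvPolynomial σ K →+* F := MvPolynomial.eval₂Hom (φ : K →+* F)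
    fun i ↦ algebraMap (MvPolynomial σ R) F (.X i)
  have hΦ : Φ.comp (MvPolynomial.map (algebraMap R K)) = algebraMap (MvPolynomial σ R) F :=
    MvPolynomial.ringHom_ext
      (fun r ↦ by simp [Φ, IsScalarTower.algebraMap_apply R (MvPolynomial σ R) F])
      fun i ↦ by simp [Φ]
  let : Algebra (MvPolynomial σ K) F := Φ.toAlgebra
  have : IsScalarTower (MvPolynomial σ R) (MvPolynomial σ K) F := .of_algebraMap_eq' hΦ.symm
  have := isFractionRing_mvPolynomial (σ := σ) (R := R) (K := K) (F := F)
  intro y hy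
  obtain ⟨z, rfl⟩ :=
    IsIntegrallyClosed.isIntegral_iff.mp (IsIntegral.tower_top (A := MvPolynomial σ K) hy)
  have hz : IsIntegral (MvPolynomial σ R) z :=
    (isIntegral_algebraMap_iff (IsFractionRing.injective (MvPolynomial σ K) F)).mp hy
  let Ψ := IsScalarTower.toAlgHom (MvPolynomial σ R) (MvPolynomial σ K) F
  have hC : Ψ '' ((MvPolynomial.C : K →+* MvPolynomial σ K) '' (integralClosure R K : Set K)) =
      φ '' integralClosure R K := by
    simp [Set.image_image, Ψ, RingHom.algebraMap_toAlgebra, Φ]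
  rw [← hC, ← AlgHom.map_adjoin]
  exact ⟨z, mem_adjoin_image_C_of_isIntegral hz, rfl⟩

end MvPolynomial

theorem IsResiduallyPurelyInseparable.of_isIntegral_of_isSepClosed {R S : Type*} [CommRing R]
    [HenselianLocalRing R] [IsSepClosed (ResidueField R)] [CommRing S] [IsDomain S] [Algebra R S]
    [Algebra.IsIntegral R S] : IsResiduallyPurelyInseparable R S := by
  have := isLocalRing_of_isIntegral_of_henselian R S
  have : IsLocalHom (algebraMap R S) := ((local_hom_TFAE (algebraMap R S)).out 0 2).mpr
    (map_maximalIdeal_le_of_isMaximal _)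
  have : Algebra.IsIntegral R (ResidueField S) := .trans S
  have : Algebra.IsIntegral (ResidueField R) (ResidueField S) := .tower_top R
  exact ⟨‹_›, ‹_›, inferInstance⟩

theorem isGeometricallyUnibranch_of_henselian_of_isSepClosed {R : Type*} [CommRing R] [IsDomain R]
    [HenselianLocalRing R] [IsSepClosed (ResidueField R)] : IsGeometricallyUnibranch R :=
  ⟨‹_›, .of_isIntegral_of_isSepClosed⟩

section FormallyUnramified

variable (P A F : Type*) [CommRing P] [CommRing A] [Algebra P A] [Algebra.FormallyUnramified P A]
  [Algebra.EssFiniteType P A] [Field F] [Algebra P F]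

theorem isReduced_tensorProduct_of_formallyUnramified : IsReduced (A ⊗[P] F) :=
  let e := Algebra.TensorProduct.comm P A F
  have : IsReduced (F ⊗[P] A) := Algebra.FormallyUnramified.isReduced_of_field F _
  isReduced_of_injective e e.injective

theorem isArtinianRing_tensorProduct_of_formallyUnramified : IsArtinianRing (A ⊗[P] F) :=
  have : Module.Finite F (F ⊗[P] A) := Algebra.FormallyUnramified.finite_of_free F _
  have : IsArtinianRing (F ⊗[P] A) := .of_finite F _
  (Algebra.TensorProduct.comm P A F).toRingEquiv.symm.surjective.isArtinianRing

end FormallyUnramified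

theorem isFractionRing_tensorProduct_of_isField {P A F : Type*} [CommRing P] [CommRing A]
    [Algebra P A] [Module.Flat P A] [Field F] [Algebra P F] [IsFractionRing P F]
    (h : IsField (A ⊗[P] F)) : IsFractionRing A (A ⊗[P] F) := by
  let := h.toField
  have : FaithfulSMul A (A ⊗[P] F) := (faithfulSMul_iff_algebraMap_injective _ _).mpr
    (Algebra.TensorProduct.includeLeft_injective (S := A) (IsFractionRing.injective P F))
  refine IsFractionRing.of_field _ _ fun z ↦ ?_
  have : IsLocalization (Algebra.algebraMapSubmonoid A (nonZeroDivisors P)) (A ⊗[P] F) :=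
    inferInstance
  obtain ⟨⟨x, s⟩, hx⟩ :=
    IsLocalization.surj (Algebra.algebraMapSubmonoid A (nonZeroDivisors P)) z
  exact ⟨x, s, (eq_div_iff (IsLocalization.map_units (A ⊗[P] F) s).ne_zero).mpr hx⟩

theorem toIntegralClosure_bijective_of_isLocalization_of_etale {P S A F : Type*} [CommRing P]
    [CommRing S] [Algebra P S] [Algebra.Etale P S] (M : Submonoid S) [CommRing A] [Algebra S A]
    [IsLocalization M A] [Algebra P A] [IsScalarTower P S A] [CommRing F] [Algebra P F] :
    Function.Bijective (TensorProduct.toIntegralClosure P A F) :=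
  TensorProduct.toIntegralClosure_bijective_of_tower (S := S)
    TensorProduct.toIntegralClosure_bijective_of_smooth
    (TensorProduct.toIntegralClosure_bijective_of_isLocalization M)

theorem IsGeometricallyUnibranch.of_isLocalization_of_etale {σ R S A : Type*} [CommRing R]
    [IsLocalRing R] (hR : IsGeometricallyUnibranch R) [CommRing S] [Algebra (MvPolynomial σ R) S]
    [Algebra.Etale (MvPolynomial σ R) S] (M : Submonoid S) [CommRing A] [IsLocalRing A]
    [Algebra S A] [IsLocalization M A] [Algebra (MvPolynomial σ R) A]
    [IsScalarTower (MvPolynomial σ R) S A] [Algebra R A] [IsScalarTower R (MvPolynomial σ R) A]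
    [IsLocalHom (algebraMap R A)] : IsGeometricallyUnibranch A := by
  have := hR.isDomain
  let P := MvPolynomial σ R
  let F := FractionRing P
  have : Algebra.FormallyUnramified S A := .of_isLocalization M
  have : Algebra.FormallyUnramified P A := .comp P S A
  have : Algebra.EssFiniteType S A := .of_isLocalization _ M
  have : Algebra.EssFiniteType P A := .comp P S A
  have : Module.Flat S A := IsLocalization.flat _ M
  have : Module.Flat P A := .trans P S A
  have := isReduced_tensorProduct_of_formallyUnramified P A F
  have := isArtinianRing_tensorProduct_of_formallyUnramified P A F
  have : Nontrivial (A ⊗[P] F) := (Algebra.TensorProduct.includeLeft_injective (S := A)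
    (IsFractionRing.injective P F)).nontrivial
  let φ : FractionRing R →ₐ[R] F := IsFractionRing.liftAlgHom (g := Algebra.ofId R F)
    (FaithfulSMul.algebraMap_injective R F)
  have hA : IsResiduallyPurelyInseparable A (integralClosure A (A ⊗[P] F)) :=
    hR.isResiduallyPurelyInseparable.of_integralClosure_le_adjoin _
      (integralClosure_le_adjoin_trans (integralClosure_mvPolynomial_le_adjoin φ)
        (integralClosure_tensorProduct_le_adjoin
          (toIntegralClosure_bijective_of_isLocalization_of_etale M).surjective))
  have := hA.isLocalRing
  have hfield : IsField (A ⊗[P] F) := isField_of_isLocalRing_integralClosure A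
  have := isFractionRing_tensorProduct_of_isField hfield
  let := hfield.toField
  have : IsDomain A := (IsFractionRing.injective A (A ⊗[P] F)).isDomain _
  exact isGeometricallyUnibranch_of_isFractionRing hA

theorem localization_geometrically_unibranch_of_smooth_general {R R' : Type*} [CommRing R]
    [IsLocalRing R] (hR : IsGeometricallyUnibranch R) [CommRing R'] [Algebra R R']
    [Algebra.FinitePresentation R R'] (𝔭 : Ideal R') [𝔭.IsPrime] [Algebra.IsSmoothAt R 𝔭]
    (h𝔭 : (maximalIdeal R).map (algebraMap R R') ≤ 𝔭) :
    IsGeometricallyUnibranch (Localization.AtPrime 𝔭) := by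
  obtain ⟨f, hf, n, _, _, _⟩ :=
    Algebra.IsSmoothAt.exists_isStandardEtale_mvPolynomial (R := R) (p := 𝔭)
  let P := MvPolynomial (Fin n) R
  let S := Localization.Away f
  let A := Localization.AtPrime 𝔭
  have hle : Submonoid.powers f ≤ 𝔭.primeCompl := Submonoid.powers_le.mpr hf
  let : Algebra S A := IsLocalization.localizationAlgebraOfSubmonoidLe S A _ _ hle
  have : IsScalarTower R' S A :=
    IsLocalization.localization_isScalarTower_of_submonoid_le S A _ _ hle
  have : IsLocalization (𝔭.primeCompl.map (algebraMap R' S)) A :=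
    IsLocalization.isLocalization_of_submonoid_le S A _ _ hle
  let : Algebra P A := ((algebraMap S A).comp (algebraMap P S)).toAlgebra
  have : IsScalarTower P S A := .of_algebraMap_eq' rfl
  have : IsScalarTower R S A := .to₁₃₄ R R' S A
  have : IsScalarTower R P A := .to₁₂₄ R P S A
  have : IsLocalHom (algebraMap R A) := ((local_hom_TFAE (algebraMap R A)).out 0 2).mpr <| by
    rw [IsScalarTower.algebraMap_eq R R' A, ← Ideal.map_map,
      ← Localization.AtPrime.map_eq_maximalIdeal]
    exact Ideal.map_mono h𝔭
  exact hR.of_isLocalization_of_etale (σ := Fin n) (𝔭.primeCompl.map (algebraMap R' S))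

/-- (Lemma 3.6 of the paper.)
Let `R` be a Noetherian, strictly henselian local domain, `R → R'` a smooth ring map,
and `𝔭` a prime of `R'` containing `m_R · R'`. Then the localization `R'_𝔭` is
geometrically unibranch: it is a domain, and its integral closure in its fraction field
is a local ring whose residue field is a purely inseparable extension of the residue
field of `R'_𝔭`. -/
theorem localization_geometrically_unibranch_of_smooth
    (R R' : Type u) [CommRing R] [CommRing R'] [IsDomain R] [IsNoetherianRing R]
    [HenselianLocalRing R] [IsSepClosed (ResidueField R)]
    [Algebra R R'] [Algebra.Smooth R R']
    (𝔭 : Ideal R') [𝔭.IsPrime]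
    (h𝔭 : (maximalIdeal R).map (algebraMap R R') ≤ 𝔭) :
    ∃ _hdom : IsDomain (Localization.AtPrime 𝔭),
      ∃ _hloc : IsLocalRing
          (integralClosure (Localization.AtPrime 𝔭)
            (FractionRing (Localization.AtPrime 𝔭))),
        ∃ _hl : IsLocalHom
            (algebraMap (Localization.AtPrime 𝔭)
              (integralClosure (Localization.AtPrime 𝔭)
                (FractionRing (Localization.AtPrime 𝔭)))),
          @IsPurelyInseparable
            (ResidueField (Localization.AtPrime 𝔭))
            (ResidueField
              (integralClosure (Localization.AtPrime 𝔭)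
                (FractionRing (Localization.AtPrime 𝔭)))) _ _
            (ResidueField.map
              (algebraMap (Localization.AtPrime 𝔭)
                (integralClosure (Localization.AtPrime 𝔭)
                  (FractionRing (Localization.AtPrime 𝔭))))).toAlgebra := by
  obtain ⟨hdom, hloc, hhom, hinsep⟩ := localization_geometrically_unibranch_of_smooth_general
    (isGeometricallyUnibranch_of_henselian_of_isSepClosed (R := R)) 𝔭 h𝔭
  exact ⟨hdom, hloc, hhom, by rwa [toAlgebra_residueFieldMap]⟩
end

section
/- Let R be a Noetherian local unique factorization domain and let Δ be a prime element of R lying in the maximal ideal m_R. Then the quotient ring R[u,v]/(uv − Δ) of the polynomial ring in two variables is a unique factorization domain. -/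
open IsLocalRing

/-!
The proof is Nagata's criterion for the prime element `u`. Once `u` is inverted, `v = Δ / u` is
determined, so the localization is the ring of Laurent polynomials `R[u, u⁻¹]`, a unique
factorization domain; and `u` is prime because killing it leaves the domain `(R / Δ)[v]`. The
criterion also needs that no nonzero element is divisible by all powers of `u`. By the symmetry
`u ↔ v` this may be checked for `v`, whose image in `R[u, u⁻¹]` is an associate of `Δ`.
-/

section Nagata

variable {A : Type*} [CommRing A] [IsDomain A] {x : A} (S : Type*) [CommRing S] [Algebra A S]
  [IsLocalization.Away x S]

theorem dvd_of_algebraMap_dvd_algebraMap_of_away (hx : Prime x) {b c : A} (hxb : ¬x ∣ b)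
    (h : algebraMap A S b ∣ algebraMap A S c) : b ∣ c := by
  obtain ⟨_, ⟨n, rfl⟩, d, hd⟩ :=
    ((IsLocalization.toLocalizationMap (.powers x) S).map_dvd_map).1 h
  obtain ⟨e, rfl⟩ : x ^ n ∣ d := hx.pow_dvd_of_dvd_mul_left n hxb ⟨c, hd.symm⟩
  exact ⟨e, mul_left_cancel₀ (pow_ne_zero n hx.ne_zero) (by linear_combination hd)⟩

theorem prime_of_prime_algebraMap_of_away (hx : Prime x) {b : A} (hxb : ¬x ∣ b)
    (hb : Prime (algebraMap A S b)) : Prime b := by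
  refine ⟨fun h => hxb (h ▸ dvd_zero x), fun h => hb.not_isUnit (h.map _), fun c d hcd => ?_⟩
  have hcd' : algebraMap A S b ∣ algebraMap A S c * algebraMap A S d :=
    map_mul (algebraMap A S) c d ▸ map_dvd (algebraMap A S) hcd
  exact (hb.dvd_or_dvd hcd').imp (dvd_of_algebraMap_dvd_algebraMap_of_away S hx hxb)
    (dvd_of_algebraMap_dvd_algebraMap_of_away S hx hxb)

theorem exists_prime_mem_of_prime_mem_map_of_away (hx : Prime x)
    (hfin : ∀ a : A, a ≠ 0 → FiniteMultiplicity x a) {I : Ideal A} [I.IsPrime] (hxI : x ∉ I) {q : S}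
    (hqI : q ∈ I.map (algebraMap A S)) (hq : Prime q) : ∃ b ∈ I, Prime b := by
  obtain ⟨⟨⟨a, haI⟩, ⟨s, hs⟩⟩, hqa⟩ :=
    (IsLocalization.mem_map_algebraMap_iff (.powers x) S).1 hqI
  have hprime_a : Prime (algebraMap A S a) :=
    ((associated_mul_unit_right q _ (IsLocalization.map_units S ⟨s, hs⟩)).trans
      (.of_eq hqa)).prime_iff.1 hq
  have ha : a ≠ 0 := fun h => hprime_a.ne_zero (by rw [h, map_zero])
  obtain ⟨b, hab, hxb⟩ := (hfin a ha).exists_eq_pow_mul_and_not_dvd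
  have hbI : b ∈ I :=
    (Ideal.IsPrime.mem_or_mem ‹_› (hab ▸ haI)).resolve_left
      fun h => hxI (Ideal.IsPrime.mem_of_pow_mem ‹_› _ h)
  have hprime_b : Prime (algebraMap A S b) := by
    rw [hab, map_mul, map_pow] at hprime_a
    exact (associated_unit_mul_left _ _
      ((IsLocalization.Away.algebraMap_isUnit x).pow _)).prime_iff.1 hprime_a
  exact ⟨b, hbI, prime_of_prime_algebraMap_of_away S hx hxb hprime_b⟩

theorem uniqueFactorizationMonoid_of_isLocalization_away [UniqueFactorizationMonoid S]
    (hx : Prime x) (hfin : ∀ a : A, a ≠ 0 → FiniteMultiplicity x a) :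
    UniqueFactorizationMonoid A := by
  rw [UniqueFactorizationMonoid.iff_exists_prime_mem_of_isPrime]
  intro I hI hprimeI
  by_cases hxI : x ∈ I
  · exact ⟨x, hxI, hx⟩
  have : (I.map (algebraMap A S)).IsPrime :=
    IsLocalization.isPrime_of_isPrime_disjoint (.powers x) S I hprimeI
      ((Ideal.disjoint_powers_iff_notMem_of_isPrime x).2 hxI)
  have hinj : Function.Injective (algebraMap A S) :=
    IsLocalization.injective S (powers_le_nonZeroDivisors_of_noZeroDivisors hx.ne_zero)
  obtain ⟨q, hqI, hq⟩ := Ideal.IsPrime.exists_mem_prime_of_ne_bot this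
    (mt (Ideal.map_eq_bot_iff_of_injective hinj).1 hI)
  exact exists_prime_mem_of_prime_mem_map_of_away S hx hfin hxI hqI hq

end Nagata

section Laurent

open LaurentPolynomial

theorem uniqueFactorizationMonoid_laurentPolynomial (R : Type*) [CommRing R] [IsDomain R]
    [UniqueFactorizationMonoid R] : UniqueFactorizationMonoid R[T;T⁻¹] :=
  .of_isLocalization (.powers (Polynomial.X : Polynomial R)) R[T;T⁻¹]

theorem isUnit_laurentPolynomial_C_iff {R : Type*} [CommRing R] {r : R} :
    IsUnit (C r) ↔ IsUnit r :=
  ⟨fun h => by simpa using h.map (LaurentPolynomial.eval₂ (RingHom.id R) 1), fun h => h.map C⟩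

end Laurent

/-- The ring `R[u, v] / (uv - Δ)`, that is, the coordinate ring of the hyperbola `uv = Δ`. -/
abbrev HyperbolaRing {R : Type*} [CommRing R] (Δ : R) : Type _ :=
  MvPolynomial (Fin 2) R ⧸
    Ideal.span {(MvPolynomial.X 0 : MvPolynomial (Fin 2) R) * MvPolynomial.X 1 - MvPolynomial.C Δ}

namespace HyperbolaRing

open LaurentPolynomial

variable {R : Type*} [CommRing R] (Δ : R)

/-- The first coordinate function on the hyperbola `uv = Δ`. -/
noncomputable def u : HyperbolaRing Δ := Ideal.Quotient.mk _ (MvPolynomial.X 0)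

/-- The second coordinate function on the hyperbola `uv = Δ`. -/
noncomputable def v : HyperbolaRing Δ := Ideal.Quotient.mk _ (MvPolynomial.X 1)

theorem u_mul_v : u Δ * v Δ = algebraMap R (HyperbolaRing Δ) Δ :=
  Ideal.Quotient.eq.2 (Ideal.mem_span_singleton_self _)

variable {Δ}

@[elab_as_elim]
theorem induction_on {P : HyperbolaRing Δ → Prop} (a : HyperbolaRing Δ)
    (algebraMap : ∀ r, P (algebraMap R _ r)) (add : ∀ a b, P a → P b → P (a + b))
    (mul_u : ∀ a, P a → P (a * u Δ)) (mul_v : ∀ a, P a → P (a * v Δ)) : P a := by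
  obtain ⟨f, rfl⟩ := Ideal.Quotient.mk_surjective a
  induction f using MvPolynomial.induction_on with
  | C r => exact algebraMap r
  | add p q hp hq => exact add _ _ hp hq
  | mul_X p i hp =>
    fin_cases i
    · exact mul_u _ hp
    · exact mul_v _ hp

section Lift

variable {B : Type*} [CommRing B] [Algebra R B]

/-- The universal property of `R[u, v] / (uv - Δ)`: a morphism to an `R`-algebra is a pair of
elements with product `Δ`. -/
noncomputable def lift (x y : B) (h : x * y = algebraMap R B Δ) : HyperbolaRing Δ →ₐ[R] B :=
  Ideal.Quotient.liftₐ _ (MvPolynomial.aeval ![x, y]) fun a ha => by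
    obtain ⟨b, rfl⟩ := Ideal.mem_span_singleton.1 ha
    simp [h]

variable {x y : B} (h : x * y = algebraMap R B Δ)

@[simp]
theorem lift_u : lift x y h (u Δ) = x :=
  MvPolynomial.aeval_X (R := R) ![x, y] 0

@[simp]
theorem lift_v : lift x y h (v Δ) = y :=
  MvPolynomial.aeval_X (R := R) ![x, y] 1

end Lift

section Swap

variable (Δ) in
/-- The symmetry of the hyperbola `uv = Δ` exchanging the two coordinates. -/
noncomputable def swap : HyperbolaRing Δ →ₐ[R] HyperbolaRing Δ :=
  lift (v Δ) (u Δ) (by rw [mul_comm, u_mul_v])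

@[simp]
theorem swap_u : swap Δ (u Δ) = v Δ :=
  lift_u _

@[simp]
theorem swap_v : swap Δ (v Δ) = u Δ :=
  lift_v _

theorem swap_swap (a : HyperbolaRing Δ) : swap Δ (swap Δ a) = a := by
  induction a using induction_on with
  | algebraMap r => simp only [AlgHom.commutes]
  | add a b ha hb => rw [map_add, map_add, ha, hb]
  | mul_u a ha => rw [map_mul, map_mul, ha, swap_u, swap_v]
  | mul_v a ha => rw [map_mul, map_mul, ha, swap_v, swap_u]

theorem swap_injective : Function.Injective (swap Δ) :=
  Function.LeftInverse.injective swap_swap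

end Swap

section Laurent

variable (Δ) in
/-- The restriction of functions to the part `u ≠ 0` of the hyperbola `uv = Δ`, where
`v = Δ / u`. -/
noncomputable def toLaurent : HyperbolaRing Δ →ₐ[R] R[T;T⁻¹] :=
  lift (T 1) (C Δ * T (-1)) (by
    rw [mul_left_comm, ← T_add, add_neg_cancel, T_zero, mul_one, LaurentPolynomial.C_eq_algebraMap])

@[simp]
theorem toLaurent_u : toLaurent Δ (u Δ) = T 1 :=
  lift_u _

@[simp]
theorem toLaurent_v : toLaurent Δ (v Δ) = C Δ * T (-1) :=
  lift_v _

theorem toLaurent_aeval_u (p : Polynomial R) :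
    toLaurent Δ (Polynomial.aeval (u Δ) p) = Polynomial.toLaurent p := by
  rw [← Polynomial.aeval_algHom_apply, toLaurent_u, ← Polynomial.toLaurent_X,
    ← Polynomial.coe_toLaurentAlg, Polynomial.aeval_algHom_apply, Polynomial.aeval_X_left_apply]

theorem exists_u_pow_mul_eq_aeval (a : HyperbolaRing Δ) :
    ∃ (n : ℕ) (p : Polynomial R), u Δ ^ n * a = Polynomial.aeval (u Δ) p := by
  induction a using induction_on with
  | algebraMap r => exact ⟨0, Polynomial.C r, by simp⟩
  | add a b ha hb =>
    obtain ⟨n, p, hp⟩ := ha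
    obtain ⟨m, q, hq⟩ := hb
    refine ⟨n + m, Polynomial.X ^ m * p + Polynomial.X ^ n * q, ?_⟩
    simp only [map_add, map_mul, map_pow, Polynomial.aeval_X, ← hp, ← hq]
    ring
  | mul_u a ha =>
    obtain ⟨n, p, hp⟩ := ha
    refine ⟨n, p * Polynomial.X, ?_⟩
    rw [map_mul, Polynomial.aeval_X, ← hp, mul_assoc]
  | mul_v a ha =>
    obtain ⟨n, p, hp⟩ := ha
    refine ⟨n + 1, p * Polynomial.C Δ, ?_⟩
    rw [map_mul, Polynomial.aeval_C, ← hp, ← u_mul_v]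
    ring

theorem exists_u_pow_mul_eq_zero_of_toLaurent_eq_zero {a : HyperbolaRing Δ}
    (ha : toLaurent Δ a = 0) : ∃ n : ℕ, u Δ ^ n * a = 0 := by
  obtain ⟨n, p, hp⟩ := exists_u_pow_mul_eq_aeval a
  have hp0 : Polynomial.toLaurent p = 0 := by
    rw [← toLaurent_aeval_u (Δ := Δ), ← hp, map_mul, ha, mul_zero]
  rw [Polynomial.toLaurent_eq_zero.1 hp0, map_zero] at hp
  exact ⟨n, hp⟩

/-- Laurent polynomials as an algebra over the coordinate ring of the hyperbola, through
`HyperbolaRing.toLaurent`. -/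
noncomputable instance algebraLaurent : Algebra (HyperbolaRing Δ) R[T;T⁻¹] :=
  (toLaurent Δ).toAlgebra

theorem algebraMap_laurent_apply (a : HyperbolaRing Δ) :
    algebraMap (HyperbolaRing Δ) R[T;T⁻¹] a = toLaurent Δ a :=
  rfl

instance isLocalization_away_u : IsLocalization.Away (u Δ) R[T;T⁻¹] := by
  refine .mk (u Δ) ?_ (fun z => ?_) fun a b hab => ?_
  · rw [algebraMap_laurent_apply, toLaurent_u]
    exact isUnit_T 1
  · obtain ⟨n, p, hp⟩ := z.exists_T_pow
    refine ⟨n, Polynomial.aeval (u Δ) p, ?_⟩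
    rw [algebraMap_laurent_apply, algebraMap_laurent_apply, toLaurent_aeval_u, hp, toLaurent_u,
      T_pow, mul_one]
  · have h0 : toLaurent Δ (a - b) = 0 := by rw [map_sub, sub_eq_zero]; exact hab
    obtain ⟨n, hn⟩ := exists_u_pow_mul_eq_zero_of_toLaurent_eq_zero h0
    exact ⟨n, sub_eq_zero.1 (by rw [← mul_sub, hn])⟩

end Laurent

section Domain

variable [IsDomain R]

theorem u_mem_nonZeroDivisors (hΔ : Δ ≠ 0) : u Δ ∈ nonZeroDivisors (HyperbolaRing Δ) := by
  have hX : Prime (MvPolynomial.X 0 : MvPolynomial (Fin 2) R) := MvPolynomial.X_prime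
  have not_dvd : ¬(MvPolynomial.X 0 : MvPolynomial (Fin 2) R) ∣
      MvPolynomial.X 0 * MvPolynomial.X 1 - MvPolynomial.C Δ := by
    rw [dvd_sub_right (dvd_mul_right _ _)]
    intro h
    exact hΔ (by simpa using map_dvd (MvPolynomial.eval (0 : Fin 2 → R)) h)
  rw [mem_nonZeroDivisors_iff_right]
  intro a ha
  obtain ⟨f, rfl⟩ := Ideal.Quotient.mk_surjective a
  rw [u, ← map_mul, Ideal.Quotient.eq_zero_iff_dvd] at ha
  obtain ⟨g, hg⟩ := ha
  obtain ⟨k, rfl⟩ := (hX.dvd_or_dvd ⟨f, by rw [← hg, mul_comm]⟩).resolve_left not_dvd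
  rw [Ideal.Quotient.eq_zero_iff_dvd]
  exact ⟨k, mul_right_cancel₀ hX.ne_zero (by rw [hg]; ring)⟩

theorem toLaurent_injective (hΔ : Δ ≠ 0) : Function.Injective (toLaurent Δ) :=
  IsLocalization.injective R[T;T⁻¹] (M := .powers (u Δ))
    (Submonoid.powers_le.2 (u_mem_nonZeroDivisors hΔ))

theorem isDomain (hΔ : Δ ≠ 0) : IsDomain (HyperbolaRing Δ) :=
  (toLaurent_injective hΔ).isDomain (toLaurent Δ).toRingHom

end Domain

section FiniteMultiplicity

variable [IsDomain R] [UniqueFactorizationMonoid R]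

theorem finiteMultiplicity_v (hΔ : Δ ≠ 0) (hunit : ¬IsUnit Δ) {a : HyperbolaRing Δ}
    (ha : a ≠ 0) : FiniteMultiplicity (v Δ) a := by
  have := uniqueFactorizationMonoid_laurentPolynomial R
  have hv : ¬IsUnit (toLaurent Δ (v Δ)) := by
    rwa [toLaurent_v, (isUnit_T (-1)).mul_right_iff, isUnit_laurentPolynomial_C_iff]
  have ha' : toLaurent Δ a ≠ 0 := (map_ne_zero_iff _ (toLaurent_injective hΔ)).2 ha
  exact (FiniteMultiplicity.of_not_isUnit hv ha').imp fun n hn hdvd =>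
    hn (map_pow (toLaurent Δ) _ _ ▸ map_dvd (toLaurent Δ) hdvd)

theorem finiteMultiplicity_u (hΔ : Δ ≠ 0) (hunit : ¬IsUnit Δ) {a : HyperbolaRing Δ}
    (ha : a ≠ 0) : FiniteMultiplicity (u Δ) a := by
  have ha' : swap Δ a ≠ 0 := (map_ne_zero_iff _ swap_injective).2 ha
  refine (finiteMultiplicity_v hΔ hunit ha').imp fun n hn hdvd => hn ?_
  simpa only [map_pow, swap_u] using map_dvd (swap Δ) hdvd

end FiniteMultiplicity

section Prime

variable (Δ) in
/-- The restriction of functions to the locus `u = 0`, where `Δ = 0` and `v` is a coordinate. -/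
noncomputable def modU : HyperbolaRing Δ →ₐ[R] Polynomial (R ⧸ Ideal.span {Δ}) :=
  lift 0 Polynomial.X (by
    rw [zero_mul, Polynomial.algebraMap_apply, Ideal.Quotient.algebraMap_eq,
      Ideal.Quotient.eq_zero_iff_mem.2 (Ideal.mem_span_singleton_self Δ), Polynomial.C_0])

@[simp]
theorem modU_u : modU Δ (u Δ) = 0 :=
  lift_u _

@[simp]
theorem modU_v : modU Δ (v Δ) = Polynomial.X :=
  lift_v _

theorem modU_aeval_v (p : Polynomial R) :
    modU Δ (Polynomial.aeval (v Δ) p) = p.map (Ideal.Quotient.mk (Ideal.span {Δ})) := by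
  rw [← Polynomial.aeval_algHom_apply, modU_v]
  rfl

theorem exists_eq_u_mul_add_aeval_v (a : HyperbolaRing Δ) :
    ∃ (b : HyperbolaRing Δ) (p : Polynomial R), a = u Δ * b + Polynomial.aeval (v Δ) p := by
  induction a using induction_on with
  | algebraMap r => exact ⟨0, Polynomial.C r, by simp⟩
  | add a b ha hb =>
    obtain ⟨c, p, rfl⟩ := ha
    obtain ⟨d, q, rfl⟩ := hb
    exact ⟨c + d, p + q, by rw [map_add]; ring⟩
  | mul_u a _ => exact ⟨a, 0, by rw [map_zero, add_zero, mul_comm]⟩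
  | mul_v a ha =>
    obtain ⟨b, p, rfl⟩ := ha
    exact ⟨b * v Δ, p * Polynomial.X, by rw [map_mul, Polynomial.aeval_X]; ring⟩

theorem ker_modU : RingHom.ker (modU Δ) = Ideal.span {u Δ} := by
  refine le_antisymm (fun a ha => ?_) ?_
  · obtain ⟨b, p, rfl⟩ := exists_eq_u_mul_add_aeval_v a
    have hp : p.map (Ideal.Quotient.mk (Ideal.span {Δ})) = 0 := by
      rw [← modU_aeval_v, ← (RingHom.mem_ker).1 ha, map_add, map_mul, modU_u, zero_mul, zero_add]
    obtain ⟨q, rfl⟩ : Polynomial.C Δ ∣ p := by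
      refine (Polynomial.C_dvd_iff_dvd_coeff _ _).2 fun i => ?_
      rw [← Ideal.Quotient.eq_zero_iff_dvd, ← Polynomial.coeff_map, hp, Polynomial.coeff_zero]
    rw [Ideal.mem_span_singleton, map_mul, Polynomial.aeval_C, ← u_mul_v, mul_assoc]
    exact dvd_add (dvd_mul_right _ _) (dvd_mul_right _ _)
  · rw [Ideal.span_singleton_le_iff_mem, RingHom.mem_ker, modU_u]

theorem prime_u (hΔ : Prime Δ) : Prime (u Δ) := by
  have : Nontrivial R := ⟨Δ, 0, hΔ.ne_zero⟩
  have : (Ideal.span {Δ}).IsPrime := (Ideal.span_singleton_prime hΔ.ne_zero).2 hΔ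
  have hu : u Δ ≠ 0 := fun h => (isUnit_T 1).ne_zero (by rw [← toLaurent_u (Δ := Δ), h, map_zero])
  rw [← Ideal.span_singleton_prime hu, ← ker_modU]
  exact RingHom.ker_isPrime _

end Prime

end HyperbolaRing

theorem polynomial_quotient_ufd_of_prime_general
    (R : Type*) [CommRing R] [IsDomain R] [UniqueFactorizationMonoid R] (Δ : R) (hΔ : Prime Δ) :
    ∃ _hdom : IsDomain
        (MvPolynomial (Fin 2) R ⧸
          Ideal.span {(MvPolynomial.X 0 : MvPolynomial (Fin 2) R) * MvPolynomial.X 1 -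
            MvPolynomial.C Δ}),
      UniqueFactorizationMonoid
        (MvPolynomial (Fin 2) R ⧸
          Ideal.span {(MvPolynomial.X 0 : MvPolynomial (Fin 2) R) * MvPolynomial.X 1 -
            MvPolynomial.C Δ}) := by
  have hdom : IsDomain (HyperbolaRing Δ) := HyperbolaRing.isDomain hΔ.ne_zero
  have := uniqueFactorizationMonoid_laurentPolynomial R
  exact ⟨hdom, uniqueFactorizationMonoid_of_isLocalization_away (LaurentPolynomial R)
    (HyperbolaRing.prime_u hΔ) fun _ ha =>
      HyperbolaRing.finiteMultiplicity_u hΔ.ne_zero hΔ.not_isUnit ha⟩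

/-- Let `R` be a Noetherian local unique factorization domain and `Δ` a prime element of
`R` lying in the maximal ideal. Then `R[u,v]/(uv − Δ)` is a unique factorization
domain. -/
theorem polynomial_quotient_ufd_of_prime
    (R : Type*) [CommRing R] [IsDomain R] [IsNoetherianRing R] [IsLocalRing R]
    [UniqueFactorizationMonoid R]
    (Δ : R) (hΔmem : Δ ∈ maximalIdeal R) (hΔ : Prime Δ) :
    ∃ _hdom : IsDomain
        (MvPolynomial (Fin 2) R ⧸
          Ideal.span {(MvPolynomial.X 0 : MvPolynomial (Fin 2) R) * MvPolynomial.X 1 -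
            MvPolynomial.C Δ}),
      UniqueFactorizationMonoid
        (MvPolynomial (Fin 2) R ⧸
          Ideal.span {(MvPolynomial.X 0 : MvPolynomial (Fin 2) R) * MvPolynomial.X 1 -
            MvPolynomial.C Δ}) :=
  polynomial_quotient_ufd_of_prime_general R Δ hΔ
end
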